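/- arXiv:2211.08529 — 2 statements merged into one kernel-verified Lean document; each statement's English description precedes it below -/
import Mathlib

section
/- Fix ℏ ∈ ℂ with ℏ ∉ ℤ + τℤ and write φ(z) = φ(ℏ,z). For every integer N ≥ 1, every integer k with 1 ≤ k ≤ N, and all x₁,…,x_N, y₁,…,y_N ∈ ℂ such that every argument of φ occurring below lies off the lattice ℤ + τℤ, one has ∑_{I⊂{1,…,N},|I|=k} ( ∏_{i∈I, j∉I} φ(x_i−x_j) · ∏_{i∈I} ∏_{j=1}^{N} φ(y_j−x_i) − ∏_{i∈I, j∉I} φ(y_j−y_i) · ∏_{i∈I} ∏_{j=1}^{N} φ(y_i−x_j) ) = 0. (This is the M = 1 case of the R-matrix identities.) -/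
open Complex Finset Filter
open scoped BigOperators Topology

noncomputable section

/-- The lattice `ℤ + τℤ ⊂ ℂ`. -/
def lat (τ : ℂ) : Set ℂ := {w : ℂ | ∃ m n : ℤ, w = (m : ℂ) + (n : ℂ) * τ}

/-- The odd theta function `ϑ(z|τ)`. -/
def theta (τ z : ℂ) : ℂ :=
  -∑' k : ℤ, Complex.exp ((Real.pi : ℂ) * Complex.I * τ * ((k : ℂ) + 1/2)^2
      + 2 * (Real.pi : ℂ) * Complex.I * (z + 1/2) * ((k : ℂ) + 1/2))

/-- The Kronecker elliptic function `φ(z,u) = ϑ'(0)ϑ(z+u)/(ϑ(z)ϑ(u))`. -/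
def phi (τ z u : ℂ) : ℂ :=
  deriv (theta τ) 0 * theta τ (z + u) / (theta τ z * theta τ u)

/-!
Replace `φ` by any function `f` that has period `1`, is multiplied by `μ` under translation by
`τ`, and is holomorphic off the lattice with a simple pole at `0`. Translate all the `y j`
simultaneously by `z`. As a function of `z`, the difference of the two sides of the identity has
multipliers `1` and `μ ^ (N * k)`, and its only possible poles are where some `y b + z` meets some
`x a`. For points in general position these poles are simple, and their residues are multiples of
the same difference with `x a` and `y b` removed and `k` lowered by one, so by induction on `N` the
difference is entire. After multiplication by an exponential it is bounded, hence constant by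
Liouville's theorem, and its multipliers force it to vanish unless `μ ^ (N * k)` is an integral
power of `exp (2πiτ)`. For `f = φ(ℏ, ·)`, where `μ = exp (-2πiℏ)`, this requires that no positive
integer multiple of `ℏ` lies in the lattice. The remaining parameters are limits of such generic
ones. That `φ` is holomorphic off the lattice rests on the zeros of `ϑ`, which are read off from
the Jacobi triple product.
-/

/-! ### The period lattice -/

lemma lat_eq_closure (τ : ℂ) : lat τ = AddSubgroup.closure {1, τ} := by
  ext w
  simp [lat, AddSubgroup.mem_closure_pair, eq_comm]

lemma add_mem_lat_iff {τ a l : ℂ} (hl : l ∈ lat τ) : a + l ∈ lat τ ↔ a ∈ lat τ := by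
  rw [lat_eq_closure, SetLike.mem_coe] at *
  exact add_mem_cancel_right hl

lemma one_mem_lat (τ : ℂ) : 1 ∈ lat τ := ⟨1, 0, by simp⟩

lemma self_mem_lat (τ : ℂ) : τ ∈ lat τ := ⟨0, 1, by simp⟩

lemma countable_lat (τ : ℂ) : (lat τ).Countable :=
  (Set.countable_range fun p : ℤ × ℤ => (p.1 : ℂ) + p.2 * τ).mono
    (by rintro _ ⟨m, n, rfl⟩; exact ⟨(m, n), rfl⟩)

/-- The pair of periods `1, τ`, which gives access to the lattice theory of Mathlib. -/
def periodPair (τ : ℂ) (hτ : 0 < τ.im) : PeriodPair where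
  ω₁ := 1
  ω₂ := τ
  indep := by
    rw [LinearIndependent.pair_iff]
    intro s t h
    have ht : t = 0 := by simpa [hτ.ne'] using congrArg Complex.im h
    exact ⟨by simpa [ht] using congrArg Complex.re h, ht⟩

lemma coe_lattice_periodPair {τ : ℂ} (hτ : 0 < τ.im) :
    ((periodPair τ hτ).lattice : Set ℂ) = lat τ := by
  ext w
  simp [PeriodPair.mem_lattice, periodPair, lat, eq_comm]

lemma eventually_notMem_lat {τ : ℂ} (hτ : 0 < τ.im) (z : ℂ) : ∀ᶠ w in 𝓝[≠] z, w ∉ lat τ := by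
  have h := (periodPair τ hτ).compl_lattice_sdiff_singleton_mem_nhds z
  rw [coe_lattice_periodPair] at h
  filter_upwards [nhdsWithin_le_nhds h, self_mem_nhdsWithin] with w hw hwz hwl
  exact hw ⟨hwl, hwz⟩

lemma eventually_sub_notMem_lat {τ : ℂ} (hτ : 0 < τ.im) (c z : ℂ) :
    ∀ᶠ w in 𝓝[≠] z, w - c ∉ lat τ := by
  have h := eventually_notMem_lat hτ (z - c)
  rwa [← map_subRight_nhdsNE, eventually_map] at h

/-! ### Removable singularities and quasi-periodic entire functions -/

lemma exists_differentiable_eqOn_compl {F : ℂ → ℂ} {S : Set ℂ}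
    (hS : ∀ z, ∀ᶠ w in 𝓝[≠] z, w ∉ S) (hd : ∀ z ∉ S, DifferentiableAt ℂ F z)
    (hp : ∀ p ∈ S, Tendsto (fun h => h * F (p + h)) (𝓝[≠] 0) (𝓝 0)) :
    ∃ G, Differentiable ℂ G ∧ Set.EqOn G F Sᶜ := by
  have hlim : ∀ z ∉ S, limUnder (𝓝[≠] z) F = F z := fun z hz =>
    ((hd z hz).continuousAt.tendsto.mono_left nhdsWithin_le_nhds).limUnder_eq
  refine ⟨fun z => limUnder (𝓝[≠] z) F, fun p => ?_, hlim⟩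
  set s : Set ℂ := {w | w ∈ ({p}ᶜ : Set ℂ) → w ∉ S}
  have hs : s ∈ 𝓝 p := eventually_nhdsWithin_iff.mp (hS p)
  have hF : F =o[𝓝[≠] p] fun z => (z - p)⁻¹ := by
    by_cases hpS : p ∈ S
    · rw [← add_zero p, ← map_add_left_nhdsNE, Asymptotics.isLittleO_map,
        Asymptotics.isLittleO_iff_tendsto']
      · simpa [Function.comp_def, mul_comm] using hp p hpS
      · filter_upwards [self_mem_nhdsWithin] with h hh
        simp_all
    · exact ((hd p hpS).continuousAt.norm.isBoundedUnder_le.mono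
        nhdsWithin_le_nhds).isLittleO_sub_self_inv
  have hF' : (fun z => F z - F p) =o[𝓝[≠] p] fun z => (z - p)⁻¹ :=
    hF.sub isBoundedUnder_const.isLittleO_sub_self_inv
  have hupd : Function.update F p (limUnder (𝓝[≠] p) F) =ᶠ[𝓝 p]
      fun z => limUnder (𝓝[≠] z) F := by
    filter_upwards [hs] with w hw
    obtain rfl | hwp := eq_or_ne w p
    · simp
    · rw [Function.update_of_ne hwp, hlim w (hw hwp)]
  exact ((differentiableOn_update_limUnder_of_isLittleO hs
    (fun w hw => (hd w (hw.1 hw.2)).differentiableWithinAt) hF').differentiableAt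
      hs).congr_of_eventuallyEq hupd.symm

/-- Quasi-periodicity with constant multipliers: `F` is multiplied by `α` under translation by `1`
and by `β` under translation by `τ`. -/
structure IsQuasiperiodic (τ α β : ℂ) (F : ℂ → ℂ) : Prop where
  add_one : ∀ z, F (z + 1) = α * F z
  add_tau : ∀ z, F (z + τ) = β * F z

lemma IsQuasiperiodic.exists_multiplier {τ α β : ℂ} {F : ℂ → ℂ} (hF : IsQuasiperiodic τ α β F)
    (hα : α ≠ 0) (hβ : β ≠ 0) {l : ℂ} (hl : l ∈ lat τ) :
    ∃ γ ≠ 0, ∀ z, F (z + l) = γ * F z := by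
  rw [lat_eq_closure, SetLike.mem_coe] at hl
  induction hl using AddSubgroup.closure_induction with
  | mem l hl =>
    obtain rfl | rfl := hl
    exacts [⟨α, hα, hF.add_one⟩, ⟨β, hβ, hF.add_tau⟩]
  | zero => exact ⟨1, one_ne_zero, by simp⟩
  | add l l' _ _ ih ih' =>
    obtain ⟨⟨γ, hγ, h⟩, γ', hγ', h'⟩ := And.intro ih ih'
    exact ⟨γ' * γ, mul_ne_zero hγ' hγ, fun z => by rw [← add_assoc, h', h, mul_assoc]⟩
  | neg l _ ih =>
    obtain ⟨γ, hγ, h⟩ := ih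
    exact ⟨γ⁻¹, inv_ne_zero hγ, fun z => by
      rw [eq_inv_mul_iff_mul_eq₀ hγ, ← h, neg_add_cancel_right]⟩

lemma eq_of_quasiperiodic_extension {F G : ℂ → ℂ} {S : Set ℂ} {c γ : ℂ}
    (hS : ∀ z, ∀ᶠ w in 𝓝[≠] z, w ∉ S) (hSc : ∀ z ∉ S, z + c ∉ S) (hG : Continuous G)
    (hGF : Set.EqOn G F Sᶜ) (hF : ∀ z, F (z + c) = γ * F z) (z : ℂ) :
    G (z + c) = γ * G z := by
  have hdense : Dense Sᶜ := fun w => mem_closure_iff_frequently.mpr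
    ((hS w).frequently.filter_mono nhdsWithin_le_nhds)
  refine congrFun (Continuous.ext_on (f := fun z => G (z + c)) (g := fun z => γ * G z) hdense
    (by fun_prop) (by fun_prop) fun w hw => ?_) z
  simp only [hGF hw, hGF (hSc w hw), hF]

lemma IsQuasiperiodic.exists_entire_extension {ι : Type*} {τ α β : ℂ} {F : ℂ → ℂ}
    (hτ : 0 < τ.im) (hF : IsQuasiperiodic τ α β F) (hα : α ≠ 0) (hβ : β ≠ 0)
    (s : Finset ι) (p : ι → ℂ)
    (hd : ∀ z, (∀ i ∈ s, z - p i ∉ lat τ) → DifferentiableAt ℂ F z)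
    (hp : ∀ i ∈ s, Tendsto (fun h => h * F (p i + h)) (𝓝[≠] 0) (𝓝 0)) :
    ∃ G, Differentiable ℂ G ∧ IsQuasiperiodic τ α β G ∧
      ∀ z, (∀ i ∈ s, z - p i ∉ lat τ) → G z = F z := by
  set S : Set ℂ := {z | ∃ i ∈ s, z - p i ∈ lat τ}
  have hSmem : ∀ z, z ∉ S ↔ ∀ i ∈ s, z - p i ∉ lat τ := fun z => by simp [S]
  have hS : ∀ z, ∀ᶠ w in 𝓝[≠] z, w ∉ S := fun z => by
    simp only [hSmem, eventually_all_finset]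
    exact fun i _ => eventually_sub_notMem_lat hτ (p i) z
  have hSadd : ∀ l ∈ lat τ, ∀ z ∉ S, z + l ∉ S := fun l hl z hz => by
    simpa only [hSmem, add_sub_right_comm, add_mem_lat_iff hl] using hz
  obtain ⟨G, hG, hGF⟩ := exists_differentiable_eqOn_compl hS
    (fun z hz => hd z ((hSmem z).mp hz)) (by
      rintro q ⟨i, hi, hq⟩
      obtain ⟨γ, -, hγ⟩ := hF.exists_multiplier hα hβ hq
      refine ((mul_zero γ) ▸ (hp i hi).const_mul γ).congr fun h => ?_
      rw [mul_left_comm, ← hγ]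
      ring_nf)
  exact ⟨G, hG, ⟨eq_of_quasiperiodic_extension hS (hSadd 1 (one_mem_lat τ)) hG.continuous hGF
    hF.add_one, eq_of_quasiperiodic_extension hS (hSadd τ (self_mem_lat τ)) hG.continuous hGF
    hF.add_tau⟩, fun z hz => hGF ((hSmem z).mpr hz)⟩

section Liouville

variable {τ α β c : ℂ} {G : ℂ → ℂ}

lemma IsQuasiperiodic.apply_eq_apply (hG : IsQuasiperiodic τ α β G) (hτ : 0 < τ.im)
    (hd : Differentiable ℂ G) (hα : ‖α‖ = 1) (hβ : ‖β‖ = 1) (z w : ℂ) : G z = G w := by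
  have h1 : Function.Periodic (fun z => ‖G z‖) 1 := fun z => by simp [hG.add_one, hα]
  have h2 : Function.Periodic (fun z => ‖G z‖) τ := fun z => by simp [hG.add_tau, hβ]
  have hper : ∀ z, ∀ l ∈ (periodPair τ hτ).lattice, ‖G (z + l)‖ = ‖G z‖ := by
    intro z l hl
    rw [← SetLike.mem_coe, coe_lattice_periodPair] at hl
    obtain ⟨m, n, rfl⟩ := hl
    simpa using ((h1.int_mul m).add_period (h2.int_mul n)) z
  obtain ⟨C, hC⟩ :=
    (IsZLattice.isCompact_range_of_periodic _ _ hd.continuous.norm hper).isBounded.bddAbove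
  exact hd.apply_eq_apply_of_bounded
    (isBounded_iff_forall_norm_le.mpr ⟨C, by rintro _ ⟨v, rfl⟩; exact hC ⟨v, rfl⟩⟩) z w

lemma IsQuasiperiodic.multipliers_eq_one (hG : IsQuasiperiodic τ α β G) (hτ : 0 < τ.im)
    (hd : Differentiable ℂ G) (hα : ‖α‖ = 1) (hβ : ‖β‖ = 1) {z : ℂ} (hz : G z ≠ 0) :
    α = 1 ∧ β = 1 := by
  have hconst := hG.apply_eq_apply hτ hd hα hβ
  exact ⟨(mul_eq_right₀ hz).mp ((hG.add_one z).symm.trans (hconst _ _)),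
    (mul_eq_right₀ hz).mp ((hG.add_tau z).symm.trans (hconst _ _))⟩

-- Multiplying by `exp (-2πi b z)` with a suitable real `b` makes both multipliers unimodular.
lemma IsQuasiperiodic.eq_zero (hG : IsQuasiperiodic τ 1 c G) (hτ : 0 < τ.im)
    (hd : Differentiable ℂ G) (hc : ∀ n : ℤ, c ≠ cexp (2 * Real.pi * I * (n * τ))) (z : ℂ) :
    G z = 0 := by
  obtain rfl | hc0 := eq_or_ne c 0
  · simpa using hG.add_tau (z - τ)
  by_contra hz
  set b : ℝ := -(Real.log ‖c‖ / (2 * Real.pi * τ.im)) with hb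
  set E : ℂ → ℂ := fun w => cexp (-(2 * Real.pi * I * (b * w))) with hE
  have hEadd : ∀ v w, E (v + w) = E w * E v := fun v w => by
    simp only [hE, ← Complex.exp_add]
    ring_nf
  have hGE : IsQuasiperiodic τ (E 1) (c * E τ) fun w => G w * E w :=
    ⟨fun w => by rw [hG.add_one, hEadd]; ring, fun w => by rw [hG.add_tau, hEadd]; ring⟩
  have hE1 : ‖E 1‖ = 1 := by simp [hE, Complex.norm_exp]
  have hEτ : ‖c * E τ‖ = 1 := by
    have hre : (-(2 * Real.pi * I * (b * τ))).re = 2 * Real.pi * τ.im * b := by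
      simp only [neg_re, mul_re, re_ofNat, ofReal_re, im_ofNat, ofReal_im, mul_zero, sub_zero, I_re,
        mul_im, zero_mul, add_zero, I_im, mul_one, sub_self, zero_sub, neg_neg]
      ring
    rw [norm_mul, Complex.norm_exp, hre, hb, mul_neg, mul_div_cancel₀ _ (by positivity),
      Real.exp_neg, Real.exp_log (norm_pos_iff.mpr hc0), mul_inv_cancel₀ (by simpa using hc0)]
  obtain ⟨hE1', hEτ'⟩ := hGE.multipliers_eq_one hτ (hd.mul (by fun_prop)) hE1 hEτ
    (mul_ne_zero hz (Complex.exp_ne_zero _))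
  obtain ⟨n, hn⟩ := Complex.exp_eq_one_iff.mp hE1'
  have hbn : (b : ℂ) = ((-n : ℤ) : ℂ) := by
    apply mul_left_cancel₀ two_pi_I_ne_zero
    push_cast
    linear_combination -hn
  apply hc (-n)
  rw [← hbn, eq_inv_of_mul_eq_one_left hEτ', ← Complex.exp_neg, neg_neg]

end Liouville

/-! ### The zeros of the theta function -/

lemma integral_jacobiTheta₂_term (n : ℤ) (τ : ℂ) :
    ∫ x in (0 : ℝ)..1, jacobiTheta₂_term n x τ = if n = 0 then 1 else 0 := by
  split_ifs with hn
  · simp [hn, jacobiTheta₂_term]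
  have hterm : ∀ x : ℝ, jacobiTheta₂_term n x τ =
      cexp (Real.pi * I * n ^ 2 * τ) * cexp (2 * Real.pi * I * n * x) := fun x => by
    rw [jacobiTheta₂_term, ← Complex.exp_add, add_comm]
  simp_rw [hterm]
  rw [intervalIntegral.integral_const_mul, integral_exp_mul_complex
    (mul_ne_zero two_pi_I_ne_zero (Int.cast_ne_zero.mpr hn))]
  simp [mul_comm (2 * Real.pi * I) (n : ℂ), Complex.exp_int_mul_two_pi_mul_I]

lemma integral_jacobiTheta₂ {τ : ℂ} (hτ : 0 < τ.im) :
    ∫ x in (0 : ℝ)..1, jacobiTheta₂ x τ = 1 := by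
  have hsum := intervalIntegral.hasSum_integral_of_dominated_convergence
    (μ := MeasureTheory.volume) (a := 0) (b := 1)
    (F := fun (n : ℤ) (x : ℝ) => jacobiTheta₂_term n x τ) (f := fun x : ℝ => jacobiTheta₂ x τ)
    (fun n _ => ‖jacobiTheta₂_term n 0 τ‖)
    (fun n => by unfold jacobiTheta₂_term; fun_prop)
    (fun n => .of_forall fun x _ => by simp [norm_jacobiTheta₂_term])
    (.of_forall fun x _ => ((summable_jacobiTheta₂_term_iff 0 τ).mpr hτ).norm)
    (by simp) (.of_forall fun x _ => hasSum_jacobiTheta₂_term x hτ)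
  simp only [integral_jacobiTheta₂_term] at hsum
  exact hsum.unique (hasSum_ite_eq 0 1)

lemma theta_eq_jacobiTheta₂ (τ z : ℂ) : theta τ z =
    -(cexp (Real.pi * I * τ / 4 + Real.pi * I * (z + 1 / 2)) *
      jacobiTheta₂ (z + 1 / 2 + τ / 2) τ) := by
  rw [theta, jacobiTheta₂, ← tsum_mul_left]
  congr 1
  refine tsum_congr fun k => ?_
  rw [jacobiTheta₂_term, ← Complex.exp_add]
  ring_nf

lemma exists_theta_ne_zero {τ : ℂ} (hτ : 0 < τ.im) : ∃ z, theta τ z ≠ 0 := by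
  by_contra! h
  have hzero : ∀ w, jacobiTheta₂ w τ = 0 := fun w => by
    simpa [theta_eq_jacobiTheta₂, sub_add_cancel] using h (w - τ / 2 - 1 / 2)
  simpa [hzero] using integral_jacobiTheta₂ hτ

lemma differentiable_theta {τ : ℂ} (hτ : 0 < τ.im) : Differentiable ℂ (theta τ) := by
  have hϑ : Differentiable ℂ fun z => jacobiTheta₂ z τ := fun z =>
    differentiableAt_jacobiTheta₂_fst z hτ
  rw [funext (theta_eq_jacobiTheta₂ τ)]
  fun_prop

lemma theta_add_one (τ z : ℂ) : theta τ (z + 1) = -theta τ z := by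
  rw [theta_eq_jacobiTheta₂, theta_eq_jacobiTheta₂,
    show z + 1 + 1 / 2 + τ / 2 = z + 1 / 2 + τ / 2 + 1 by ring, jacobiTheta₂_add_left,
    show (Real.pi * I * τ / 4 + Real.pi * I * (z + 1 + 1 / 2) : ℂ) =
      Real.pi * I * τ / 4 + Real.pi * I * (z + 1 / 2) + Real.pi * I by ring, exp_add_pi_mul_I]
  ring

lemma theta_add_tau (τ z : ℂ) : theta τ (z + τ) =
    -cexp (-(Real.pi * I * τ) - 2 * Real.pi * I * z) * theta τ z := by
  rw [theta_eq_jacobiTheta₂, theta_eq_jacobiTheta₂,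
    show z + τ + 1 / 2 + τ / 2 = z + 1 / 2 + τ / 2 + τ by ring, jacobiTheta₂_add_left',
    ← exp_sub_pi_mul_I]
  simp only [← mul_assoc, mul_neg, ← Complex.exp_add]
  ring_nf

lemma theta_neg (τ z : ℂ) : theta τ (-z) = -theta τ z := by
  rw [theta, theta, neg_neg, ← (Equiv.subLeft (-1 : ℤ)).tsum_eq, ← tsum_neg]
  refine tsum_congr fun k => ?_
  rw [← Complex.exp_periodic.sub_int_mul_eq (-k - 1), ← exp_sub_pi_mul_I]
  congr 1
  simp only [Equiv.subLeft_apply]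
  push_cast
  ring

lemma theta_zero (τ : ℂ) : theta τ 0 = 0 :=
  self_eq_neg.mp (by simpa using theta_neg τ 0)

/-- The `q`-Pochhammer symbol `(u; q)_∞ = ∏ (1 - qⁿ u)`, the building block of the Jacobi triple
product. The factors have the shape `1 + aₙ` of Mathlib's lemmas on infinite products. -/
def qPochhammer (q u : ℂ) : ℂ := ∏' n : ℕ, (1 + -(q ^ n * u))

section qPochhammer

variable {q : ℂ} (hq : ‖q‖ < 1)
include hq

lemma summable_norm_pow_mul (u : ℂ) : Summable fun n : ℕ => ‖-(q ^ n * u)‖ := by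
  simpa using (summable_geometric_of_lt_one (norm_nonneg q) hq).mul_right ‖u‖

lemma qPochhammer_eq_mul (u : ℂ) : qPochhammer q u = (1 - u) * qPochhammer q (q * u) := by
  have hm := multipliable_one_add_of_summable (summable_norm_pow_mul hq (q * u))
  simp only [← mul_assoc, ← pow_succ] at hm
  have hprod := tprod_eq_zero_mul' (f := fun n : ℕ => 1 + -(q ^ n * u)) hm
  simp only [pow_succ, mul_assoc, pow_zero, one_mul, ← sub_eq_add_neg] at hprod
  simpa only [qPochhammer, ← sub_eq_add_neg] using hprod

lemma qPochhammer_ne_zero {u : ℂ} (h : ∀ n : ℕ, q ^ n * u ≠ 1) : qPochhammer q u ≠ 0 :=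
  tprod_one_add_ne_zero_of_summable
    (fun n => by simpa [← sub_eq_add_neg, sub_eq_zero] using (h n).symm)
    (summable_norm_pow_mul hq u)

lemma differentiable_qPochhammer : Differentiable ℂ (qPochhammer q) := by
  intro u
  have hu : Metric.ball (0 : ℂ) (‖u‖ + 1) ∈ 𝓝 u := Metric.isOpen_ball.mem_nhds (by simp)
  have hprod := Summable.hasProdLocallyUniformlyOn_nat_one_add (R := ℂ) (α := ℂ)
    (f := fun n w => -(q ^ n * w)) (K := Metric.ball (0 : ℂ) (‖u‖ + 1)) Metric.isOpen_ball
    (u := fun n => ‖q‖ ^ n * (‖u‖ + 1))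
    ((summable_geometric_of_lt_one (norm_nonneg q) hq).mul_right (‖u‖ + 1))
    (.of_forall fun n w hw => by
      have hwu : ‖w‖ < ‖u‖ + 1 := by simpa using hw
      rw [norm_neg, norm_mul, norm_pow]
      gcongr)
    (fun n => by fun_prop)
  exact (hprod.differentiableOn (.of_forall fun _ => by
    simpa [Finset.prod_fn] using DifferentiableOn.finsetProd (fun _ _ => by fun_prop))
    Metric.isOpen_ball).differentiableAt hu

end qPochhammer

/-- The right-hand side of the Jacobi triple product identity for `theta`, without the factors
that have no zeros. -/
def thetaProd (τ z : ℂ) : ℂ :=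
  qPochhammer (cexp (2 * Real.pi * I * τ)) (cexp (2 * Real.pi * I * z)) *
    qPochhammer (cexp (2 * Real.pi * I * τ)) (cexp (2 * Real.pi * I * (τ - z)))

lemma exp_pow_mul_exp_eq_one_iff {τ z : ℂ} {n : ℕ} :
    cexp (2 * Real.pi * I * τ) ^ n * cexp (2 * Real.pi * I * z) = 1 ↔ ∃ m : ℤ, n * τ + z = m := by
  rw [← Complex.exp_nat_mul, ← Complex.exp_add, Complex.exp_eq_one_iff]
  refine exists_congr fun m => ?_
  rw [← mul_right_inj' two_pi_I_ne_zero (b := n * τ + z)]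
  ring_nf

lemma thetaProd_add_one (τ z : ℂ) : thetaProd τ (z + 1) = thetaProd τ z := by
  simp only [thetaProd, ← sub_sub, mul_sub _ _ (1 : ℂ), mul_add_one, mul_one, Complex.exp_add,
    Complex.exp_sub, Complex.exp_two_pi_mul_I, div_one]

section thetaProd

variable {τ : ℂ} (hτ : 0 < τ.im)
include hτ

lemma norm_exp_two_pi_I_mul_lt_one : ‖cexp (2 * Real.pi * I * τ)‖ < 1 :=
  UpperHalfPlane.norm_exp_two_pi_I_lt_one ⟨τ, hτ⟩

lemma differentiable_thetaProd : Differentiable ℂ (thetaProd τ) := by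
  have h := differentiable_qPochhammer (norm_exp_two_pi_I_mul_lt_one hτ)
  unfold thetaProd
  fun_prop

lemma thetaProd_ne_zero {z : ℂ} (hz : z ∉ lat τ) : thetaProd τ z ≠ 0 := by
  refine mul_ne_zero (qPochhammer_ne_zero (norm_exp_two_pi_I_mul_lt_one hτ) fun n h => hz ?_)
    (qPochhammer_ne_zero (norm_exp_two_pi_I_mul_lt_one hτ) fun n h => hz ?_)
  · obtain ⟨m, hm⟩ := exp_pow_mul_exp_eq_one_iff.mp h
    exact ⟨m, -n, by push_cast; linear_combination hm⟩
  · obtain ⟨m, hm⟩ := exp_pow_mul_exp_eq_one_iff.mp h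
    exact ⟨-m, n + 1, by push_cast; linear_combination -hm⟩

lemma thetaProd_eq_mul (z : ℂ) : thetaProd τ z = (1 - cexp (2 * Real.pi * I * z)) *
    (qPochhammer (cexp (2 * Real.pi * I * τ)) (cexp (2 * Real.pi * I * (τ + z))) *
      qPochhammer (cexp (2 * Real.pi * I * τ)) (cexp (2 * Real.pi * I * (τ - z)))) := by
  rw [thetaProd, qPochhammer_eq_mul (norm_exp_two_pi_I_mul_lt_one hτ), ← Complex.exp_add,
    ← mul_add, mul_assoc]

lemma thetaProd_add_tau (z : ℂ) :
    thetaProd τ (z + τ) = -cexp (-(2 * Real.pi * I * z)) * thetaProd τ z := by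
  have hexp : cexp (-(2 * Real.pi * I * z)) * cexp (2 * Real.pi * I * z) = 1 := by
    rw [← Complex.exp_add, neg_add_cancel, Complex.exp_zero]
  rw [thetaProd_eq_mul hτ z, thetaProd, sub_add_cancel_right,
    qPochhammer_eq_mul (norm_exp_two_pi_I_mul_lt_one hτ) (cexp (2 * Real.pi * I * -z)),
    ← Complex.exp_add, ← mul_add, ← sub_eq_add_neg, add_comm z τ, mul_neg]
  linear_combination
    -(qPochhammer (cexp (2 * Real.pi * I * τ)) (cexp (2 * Real.pi * I * (τ + z))) *
      qPochhammer (cexp (2 * Real.pi * I * τ)) (cexp (2 * Real.pi * I * (τ - z)))) * hexp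

lemma exists_hasDerivAt_thetaProd_zero : ∃ d ≠ 0, HasDerivAt (thetaProd τ) d 0 := by
  have hq := norm_exp_two_pi_I_mul_lt_one hτ
  have hne : qPochhammer (cexp (2 * Real.pi * I * τ)) (cexp (2 * Real.pi * I * τ)) ≠ 0 :=
    qPochhammer_ne_zero hq fun n h => (pow_lt_one₀ (norm_nonneg _) hq n.succ_ne_zero).ne
      (by rw [← norm_pow, pow_succ, h, norm_one])
  have hexp : HasDerivAt (fun z : ℂ => 1 - cexp (2 * Real.pi * I * z)) (-(2 * Real.pi * I)) 0 := by
    simpa using (((hasDerivAt_id (0 : ℂ)).const_mul (2 * Real.pi * I : ℂ)).cexp).const_sub 1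
  have hdiff := differentiable_qPochhammer hq
  have hQ : DifferentiableAt ℂ (fun z =>
      qPochhammer (cexp (2 * Real.pi * I * τ)) (cexp (2 * Real.pi * I * (τ + z))) *
        qPochhammer (cexp (2 * Real.pi * I * τ)) (cexp (2 * Real.pi * I * (τ - z)))) 0 := by
    fun_prop
  refine ⟨_, ?_, (hexp.mul hQ.hasDerivAt).congr_of_eventuallyEq
    (.of_forall (thetaProd_eq_mul hτ))⟩
  simpa [Real.pi_ne_zero] using hne

end thetaProd

lemma tendsto_div_of_hasDerivAt {𝕜 : Type*} [NontriviallyNormedField 𝕜] {f : 𝕜 → 𝕜} {f' a : 𝕜}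
    (hf : HasDerivAt f f' a) (ha : f a = 0) (hf' : f' ≠ 0) :
    Tendsto (fun h => h / f (a + h)) (𝓝[≠] 0) (𝓝 f'⁻¹) := by
  simpa [ha, div_eq_mul_inv, mul_comm] using (hasDerivAt_iff_tendsto_slope_zero.mp hf).inv₀ hf'

lemma isQuasiperiodic_theta_div_thetaProd {τ : ℂ} (hτ : 0 < τ.im) :
    IsQuasiperiodic τ 1 1 fun z => theta τ z * cexp (Real.pi * I * z) / thetaProd τ z where
  add_one z := by
    rw [theta_add_one, thetaProd_add_one, mul_add_one, exp_add_pi_mul_I]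
    ring
  add_tau z := by
    have hexp : cexp (-(Real.pi * I * τ) - 2 * Real.pi * I * z) * cexp (Real.pi * I * (z + τ)) =
        cexp (-(2 * Real.pi * I * z)) * cexp (Real.pi * I * z) := by
      rw [← Complex.exp_add, ← Complex.exp_add]
      ring_nf
    rw [theta_add_tau, thetaProd_add_tau hτ, one_mul, neg_mul, neg_mul, neg_mul, neg_div_neg_eq,
      mul_right_comm, hexp, mul_right_comm, mul_assoc, mul_div_mul_left _ _ (Complex.exp_ne_zero _),
      mul_comm]

lemma exists_theta_eq_mul_thetaProd {τ : ℂ} (hτ : 0 < τ.im) : ∃ C ≠ 0, ∀ z,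
    theta τ z = C * (cexp (-(Real.pi * I * z)) * thetaProd τ z) := by
  have hθ := differentiable_theta hτ
  have hP := differentiable_thetaProd hτ
  obtain ⟨d, hd, hd0⟩ := exists_hasDerivAt_thetaProd_zero hτ
  have hpole : Tendsto (fun h => h * (theta τ (0 + h) * cexp (Real.pi * I * (0 + h)) /
      thetaProd τ (0 + h))) (𝓝[≠] 0) (𝓝 0) := by
    have hnum : Tendsto (fun h => theta τ h * cexp (Real.pi * I * h)) (𝓝[≠] 0) (𝓝 0) := by
      have hcont : Continuous fun h => theta τ h * cexp (Real.pi * I * h) :=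
        hθ.continuous.mul (by fun_prop)
      simpa [theta_zero] using (hcont.tendsto 0).mono_left nhdsWithin_le_nhds
    have h := hnum.mul (tendsto_div_of_hasDerivAt hd0 (by simp [thetaProd_eq_mul hτ]) hd)
    rw [zero_mul] at h
    exact h.congr fun h => by rw [zero_add]; ring
  obtain ⟨G, hG, hGq, hGF⟩ := (isQuasiperiodic_theta_div_thetaProd hτ).exists_entire_extension hτ
    one_ne_zero one_ne_zero ({0} : Finset ℂ) id
    (fun z hz => (hθ.differentiableAt.mul (by fun_prop)).div hP.differentiableAt
      (thetaProd_ne_zero hτ (by simpa using hz)))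
    (by simpa using hpole)
  have heq : ∀ z, theta τ z = G 0 * (cexp (-(Real.pi * I * z)) * thetaProd τ z) := by
    refine congrFun (Continuous.ext_on ((countable_lat τ).dense_compl ℂ) hθ.continuous
      (((by fun_prop : Continuous fun z : ℂ => cexp (-(Real.pi * I * z))).mul
        hP.continuous).const_mul _) fun z hz => ?_)
    rw [hGq.apply_eq_apply hτ hG norm_one norm_one 0 z, hGF z (by simpa using hz),
      div_mul_eq_mul_div, eq_div_iff (thetaProd_ne_zero hτ hz), Complex.exp_neg]
    field_simp
  obtain ⟨z, hz⟩ := exists_theta_ne_zero hτ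
  exact ⟨G 0, fun h => hz (by rw [heq, h, zero_mul]), heq⟩

lemma theta_ne_zero {τ z : ℂ} (hτ : 0 < τ.im) (hz : z ∉ lat τ) : theta τ z ≠ 0 := by
  obtain ⟨C, hC, hθ⟩ := exists_theta_eq_mul_thetaProd hτ
  rw [hθ]
  exact mul_ne_zero hC (mul_ne_zero (Complex.exp_ne_zero _) (thetaProd_ne_zero hτ hz))

lemma deriv_theta_zero_ne_zero {τ : ℂ} (hτ : 0 < τ.im) : deriv (theta τ) 0 ≠ 0 := by
  obtain ⟨C, hC, hθ⟩ := exists_theta_eq_mul_thetaProd hτ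
  obtain ⟨d, hd, hP⟩ := exists_hasDerivAt_thetaProd_zero hτ
  have hP0 : thetaProd τ 0 = 0 := by simp [thetaProd_eq_mul hτ]
  have hexp : DifferentiableAt ℂ (fun z : ℂ => cexp (-(Real.pi * I * z))) 0 := by fun_prop
  rw [funext hθ, ((hexp.hasDerivAt.fun_mul hP).const_mul C).deriv]
  simp [hP0, hC, hd]

/-! ### The Kronecker function -/

section phi

variable {τ ℏ z : ℂ}

lemma isQuasiperiodic_phi (τ ℏ : ℂ) :
    IsQuasiperiodic τ 1 (cexp (-(2 * Real.pi * I * ℏ))) (phi τ ℏ) where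
  add_one z := by
    rw [phi, phi, ← add_assoc, theta_add_one, theta_add_one, mul_neg, mul_neg, neg_div_neg_eq,
      one_mul]
  add_tau z := by
    have hexp : cexp (-(Real.pi * I * τ) - 2 * Real.pi * I * (ℏ + z)) =
        cexp (-(2 * Real.pi * I * ℏ)) * cexp (-(Real.pi * I * τ) - 2 * Real.pi * I * z) := by
      rw [← Complex.exp_add]
      ring_nf
    rw [phi, phi, ← add_assoc, theta_add_tau, theta_add_tau, hexp, mul_div_assoc', ← neg_mul,
      mul_left_comm (theta τ ℏ), ← mul_div_mul_left _ (theta τ ℏ * theta τ z)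
        (neg_ne_zero.mpr (Complex.exp_ne_zero (-(Real.pi * I * τ) - 2 * Real.pi * I * z)))]
    ring

lemma differentiableAt_uncurry_phi (hτ : 0 < τ.im) (hℏ : ℏ ∉ lat τ) (hz : z ∉ lat τ) :
    DifferentiableAt ℂ (Function.uncurry (phi τ)) (ℏ, z) := by
  have hθ := differentiable_theta hτ
  have hne : theta τ ℏ * theta τ z ≠ 0 := mul_ne_zero (theta_ne_zero hτ hℏ) (theta_ne_zero hτ hz)
  unfold Function.uncurry phi
  fun_prop (disch := exact hne)

lemma tendsto_phi {α : Type*} {l : Filter α} {u g : α → ℂ} (hτ : 0 < τ.im) (hℏ : ℏ ∉ lat τ)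
    (hz : z ∉ lat τ) (hu : Tendsto u l (𝓝 ℏ)) (hg : Tendsto g l (𝓝 z)) :
    Tendsto (fun t => phi τ (u t) (g t)) l (𝓝 (phi τ ℏ z)) := by
  simpa only [Function.comp_def, Function.uncurry_apply_pair] using
    (differentiableAt_uncurry_phi hτ hℏ hz).continuousAt.tendsto.comp (hu.prodMk_nhds hg)

lemma tendsto_mul_phi_zero (hτ : 0 < τ.im) (hℏ : ℏ ∉ lat τ) :
    Tendsto (fun h => h * phi τ ℏ h) (𝓝[≠] 0) (𝓝 1) := by
  have hθ := differentiable_theta hτ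
  have hpole := tendsto_div_of_hasDerivAt (hθ 0).hasDerivAt (theta_zero τ)
    (deriv_theta_zero_ne_zero hτ)
  have hcont : Continuous fun h => deriv (theta τ) 0 * theta τ (ℏ + h) / theta τ ℏ := by
    have := hθ.continuous
    fun_prop
  have h := hpole.mul ((hcont.tendsto 0).mono_left nhdsWithin_le_nhds)
  rw [add_zero, mul_div_cancel_right₀ _ (theta_ne_zero hτ hℏ),
    inv_mul_cancel₀ (deriv_theta_zero_ne_zero hτ)] at h
  refine h.congr fun h => ?_
  rw [phi, zero_add, div_mul_div_comm, mul_div_assoc, mul_comm (theta τ h)]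

lemma exp_neg_pow_ne_exp {m : ℕ} (hm : m * ℏ ∉ lat τ) (n : ℤ) :
    cexp (-(2 * Real.pi * I * ℏ)) ^ m ≠ cexp (2 * Real.pi * I * (n * τ)) := by
  intro h
  rw [← Complex.exp_nat_mul, Complex.exp_eq_exp_iff_exists_int] at h
  obtain ⟨l, hl⟩ := h
  refine hm ⟨-l, -n, mul_left_cancel₀ two_pi_I_ne_zero ?_⟩
  push_cast
  linear_combination -hl

end phi

/-! ### Weighted sums over subsets -/

/-- One side of an identity of Ruijsenaars type: a sum over the `k`-element subsets `I` of `X`,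
in which `A` weighs the pairs in `I × (X \ I)` and `B` the pairs in `I × Y`. -/
def ruijsenaarsSum {R ι κ : Type*} [CommSemiring R] [DecidableEq ι] (X : Finset ι) (Y : Finset κ)
    (A : ι → ι → R) (B : ι → κ → R) (k : ℕ) : R :=
  ∑ J ∈ X.powersetCard k, (∏ i ∈ J, ∏ j ∈ X \ J, A i j) * ∏ i ∈ J, ∏ j ∈ Y, B i j

section ruijsenaarsSum

variable {R ι κ : Type*} [CommSemiring R] [DecidableEq ι] {X : Finset ι} {Y : Finset κ}
  {A : ι → ι → R} {B : ι → κ → R} {k : ℕ}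

lemma ruijsenaarsSum_zero : ruijsenaarsSum X Y A B 0 = 1 := by
  simp [ruijsenaarsSum]

lemma ruijsenaarsSum_empty_succ : ruijsenaarsSum ∅ Y A B (k + 1) = 0 := by
  rw [ruijsenaarsSum, powersetCard_eq_empty.mpr (by simp), sum_empty]

lemma ruijsenaarsSum_succ {a : ι} (ha : a ∈ X) :
    ruijsenaarsSum X Y A B (k + 1) =
      ∑ J ∈ (X.erase a).powersetCard (k + 1),
        (∏ i ∈ J, ∏ j ∈ X \ J, A i j) * ∏ i ∈ J, ∏ j ∈ Y, B i j +
      (∏ j ∈ Y, B a j) * ∑ J ∈ (X.erase a).powersetCard k, (∏ j ∈ X.erase a \ J, A a j) *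
        ((∏ i ∈ J, ∏ j ∈ X.erase a \ J, A i j) * ∏ i ∈ J, ∏ j ∈ Y, B i j) := by
  have haJ : ∀ {m : ℕ} {J : Finset ι}, J ∈ (X.erase a).powersetCard m → a ∉ J := fun hJ h =>
    notMem_erase a X ((mem_powersetCard.mp hJ).1 h)
  have hdisj : Disjoint ((X.erase a).powersetCard (k + 1))
      (((X.erase a).powersetCard k).image (insert a)) := by
    simp only [disjoint_right, mem_image, forall_exists_index, and_imp]
    rintro _ J - rfl hJ
    exact haJ hJ (mem_insert_self a J)
  have hsplit := powersetCard_succ_insert (notMem_erase a X) k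
  rw [insert_erase ha] at hsplit
  rw [ruijsenaarsSum, hsplit, sum_union hdisj, sum_image, mul_sum]
  · congr 1
    refine sum_congr rfl fun J hJ => ?_
    rw [sdiff_insert, ← erase_sdiff_comm, prod_insert (haJ hJ), prod_insert (haJ hJ)]
    ring
  · intro J hJ J' hJ' h
    rw [← erase_insert (haJ hJ), h, erase_insert (haJ hJ')]

lemma ruijsenaarsSum_const_mul (μ : R) :
    ruijsenaarsSum X Y A (fun i j => μ * B i j) k =
      μ ^ (Y.card * k) * ruijsenaarsSum X Y A B k := by
  rw [ruijsenaarsSum, ruijsenaarsSum, mul_sum]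
  refine sum_congr rfl fun J hJ => ?_
  simp only [prod_mul_distrib, prod_const, (mem_powersetCard.mp hJ).2, ← pow_mul]
  ring

lemma sum_powersetCard_prod_sdiff_mul [DecidableEq κ] {b : κ} (hb : b ∈ Y) :
    ∑ J ∈ X.powersetCard k, (∏ i ∈ X \ J, B i b) *
      ((∏ i ∈ J, ∏ j ∈ X \ J, A i j) * ∏ i ∈ J, ∏ j ∈ Y, B i j) =
    (∏ i ∈ X, B i b) * ruijsenaarsSum X (Y.erase b) A B k := by
  rw [ruijsenaarsSum, mul_sum]
  refine sum_congr rfl fun J hJ => ?_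
  simp only [← mul_prod_erase Y _ hb, prod_mul_distrib]
  rw [← prod_sdiff (mem_powersetCard.mp hJ).1]
  ring

variable {α : Type*} [TopologicalSpace R] [ContinuousAdd R] [ContinuousMul R] {l : Filter α}
  {A' : α → ι → ι → R} {B' : α → ι → κ → R}

lemma tendsto_ruijsenaarsSum
    (hA : ∀ i ∈ X, ∀ j ∈ X, i ≠ j → Tendsto (fun t => A' t i j) l (𝓝 (A i j)))
    (hB : ∀ i ∈ X, ∀ j ∈ Y, Tendsto (fun t => B' t i j) l (𝓝 (B i j))) :
    Tendsto (fun t => ruijsenaarsSum X Y (A' t) (B' t) k) l (𝓝 (ruijsenaarsSum X Y A B k)) := by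
  refine tendsto_finsetSum _ fun J hJ => ?_
  have hJX := (mem_powersetCard.mp hJ).1
  refine (tendsto_finsetProd _ fun i hi => tendsto_finsetProd _ fun j hj => ?_).mul
    (tendsto_finsetProd _ fun i hi => tendsto_finsetProd _ fun j hj => hB i (hJX hi) j hj)
  obtain ⟨hjX, hjJ⟩ := mem_sdiff.mp hj
  exact hA i (hJX hi) j hjX (ne_of_mem_of_not_mem hi hjJ)

-- Only the subsets containing `a` see the pole of `B' t a b`, and `A a i = B i b` turns their
-- weights into those of the subsets of `X.erase a`.
lemma tendsto_mul_ruijsenaarsSum [DecidableEq κ] {a : ι} {b : κ} {ε : α → R} {r : R}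
    (ha : a ∈ X) (hb : b ∈ Y) (hε : Tendsto ε l (𝓝 0))
    (hab : Tendsto (fun t => ε t * B' t a b) l (𝓝 r))
    (hB : ∀ i ∈ X, ∀ j ∈ Y, (i, j) ≠ (a, b) → Tendsto (fun t => B' t i j) l (𝓝 (B i j)))
    (hA : ∀ i ∈ X.erase a, A a i = B i b) :
    Tendsto (fun t => ε t * ruijsenaarsSum X Y A (B' t) (k + 1)) l
      (𝓝 (r * ((∏ j ∈ Y.erase b, B a j) * ∏ i ∈ X.erase a, B i b) *
        ruijsenaarsSum (X.erase a) (Y.erase b) A B k)) := by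
  have hprod : ∀ J ⊆ X.erase a, Tendsto (fun t => ∏ i ∈ J, ∏ j ∈ Y, B' t i j) l
      (𝓝 (∏ i ∈ J, ∏ j ∈ Y, B i j)) := fun J hJ =>
    tendsto_finsetProd _ fun i hi => tendsto_finsetProd _ fun j hj =>
      hB i (mem_of_mem_erase (hJ hi)) j hj (by rintro ⟨⟩; exact notMem_erase a X (hJ hi))
  have hwithout : Tendsto (fun t => ∑ J ∈ (X.erase a).powersetCard (k + 1),
      (∏ i ∈ J, ∏ j ∈ X \ J, A i j) * ∏ i ∈ J, ∏ j ∈ Y, B' t i j) l (𝓝 _) :=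
    tendsto_finsetSum _ fun J hJ => (hprod J (mem_powersetCard.mp hJ).1).const_mul _
  have hwith : Tendsto (fun t => ∑ J ∈ (X.erase a).powersetCard k,
      (∏ i ∈ X.erase a \ J, B i b) *
        ((∏ i ∈ J, ∏ j ∈ X.erase a \ J, A i j) * ∏ i ∈ J, ∏ j ∈ Y, B' t i j)) l (𝓝 _) :=
    tendsto_finsetSum _ fun J hJ =>
      ((hprod J (mem_powersetCard.mp hJ).1).const_mul _).const_mul _
  have hrow : Tendsto (fun t => ∏ j ∈ Y.erase b, B' t a j) l (𝓝 (∏ j ∈ Y.erase b, B a j)) :=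
    tendsto_finsetProd _ fun j hj => hB a ha j (mem_of_mem_erase hj)
      (by rintro ⟨⟩; exact notMem_erase b Y hj)
  have hcol : ∀ J, ∏ i ∈ X.erase a \ J, A a i = ∏ i ∈ X.erase a \ J, B i b := fun J =>
    prod_congr rfl fun i hi => hA i (mem_sdiff.mp hi).1
  have h := (hε.mul hwithout).add ((hab.mul hrow).mul hwith)
  rw [zero_mul, zero_add, sum_powersetCard_prod_sdiff_mul hb, ← mul_assoc, mul_assoc r] at h
  refine h.congr fun t => ?_
  simp only [ruijsenaarsSum_succ ha, ← mul_prod_erase Y (B' t a) hb, hcol]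
  ring

end ruijsenaarsSum

lemma differentiableAt_ruijsenaarsSum {𝕜 ι κ : Type*} [NontriviallyNormedField 𝕜] [DecidableEq ι]
    {X : Finset ι} {Y : Finset κ} {A : ι → ι → 𝕜} {B : 𝕜 → ι → κ → 𝕜} {k : ℕ} {z : 𝕜}
    (hB : ∀ i ∈ X, ∀ j ∈ Y, DifferentiableAt 𝕜 (fun w => B w i j) z) :
    DifferentiableAt 𝕜 (fun w => ruijsenaarsSum X Y A (B w) k) z :=
  DifferentiableAt.fun_sum fun _ hJ => (DifferentiableAt.fun_finsetProd fun i hi =>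
    DifferentiableAt.fun_finsetProd fun j hj =>
      hB i ((mem_powersetCard.mp hJ).1 hi) j hj).const_mul _

/-! ### The difference of the two sides of Ruijsenaars' identities -/

/-- The left-hand side of Ruijsenaars' identity of order `k`, for an arbitrary function `f` in
place of the Kronecker function and for arbitrary finite families `x` and `y`. -/
def ruijsenaarsDefect {A R ι κ : Type*} [Sub A] [CommRing R] [DecidableEq ι] [DecidableEq κ]
    (f : A → R) (X : Finset ι) (Y : Finset κ) (x : ι → A) (y : κ → A) (k : ℕ) : R :=
  ruijsenaarsSum X Y (fun i j => f (x i - x j)) (fun i j => f (y j - x i)) k -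
    ruijsenaarsSum Y X (fun i j => f (y j - y i)) (fun i j => f (y i - x j)) k

section ruijsenaarsDefect

variable {ι κ : Type*} [DecidableEq ι] [DecidableEq κ] {X : Finset ι} {Y : Finset κ}
  {k : ℕ}

lemma ruijsenaarsDefect_add {A R : Type*} [AddCommGroup A] [CommRing R] {f : A → R} {x : ι → A}
    {y : κ → A} {c : A} {μ : R} (hf : ∀ z, f (z + c) = μ * f z) (hXY : X.card = Y.card) :
    ruijsenaarsDefect f X Y x (fun j => y j + c) k =
      μ ^ (Y.card * k) * ruijsenaarsDefect f X Y x y k := by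
  have hsub : ∀ i j, f (y j + c - x i) = μ * f (y j - x i) := fun i j => by
    rw [add_sub_right_comm, hf]
  simp only [ruijsenaarsDefect, hsub, ruijsenaarsSum_const_mul, add_sub_add_right_eq_sub, hXY,
    mul_sub]

lemma differentiableAt_ruijsenaarsDefect_add {𝕜 : Type*} [NontriviallyNormedField 𝕜] {f : 𝕜 → 𝕜}
    {x : ι → 𝕜} {y : κ → 𝕜} {z : 𝕜}
    (hf : ∀ i ∈ X, ∀ j ∈ Y, DifferentiableAt 𝕜 f (y j + z - x i)) :
    DifferentiableAt 𝕜 (fun w => ruijsenaarsDefect f X Y x (fun j => y j + w) k) z := by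
  have hcomp : ∀ i ∈ X, ∀ j ∈ Y, DifferentiableAt 𝕜 (fun w => f (y j + w - x i)) z :=
    fun i hi j hj => DifferentiableAt.comp z (f := fun w => y j + w - x i) (hf i hi j hj)
      (by fun_prop)
  simp only [ruijsenaarsDefect, add_sub_add_right_eq_sub]
  exact (differentiableAt_ruijsenaarsSum hcomp).sub
    (differentiableAt_ruijsenaarsSum fun j hj i hi => hcomp i hi j hj)

lemma tendsto_ruijsenaarsDefect {α : Type*} {l : Filter α} {A R : Type*} [Sub A]
    [CommRing R] [TopologicalSpace R] [IsTopologicalRing R] {F : α → A → R} {f : A → R}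
    {x : α → ι → A} {x₀ : ι → A} {y : α → κ → A} {y₀ : κ → A}
    (hxx : ∀ i ∈ X, ∀ j ∈ X, i ≠ j →
      Tendsto (fun t => F t (x t i - x t j)) l (𝓝 (f (x₀ i - x₀ j))))
    (hyy : ∀ i ∈ Y, ∀ j ∈ Y, i ≠ j →
      Tendsto (fun t => F t (y t i - y t j)) l (𝓝 (f (y₀ i - y₀ j))))
    (hyx : ∀ i ∈ Y, ∀ j ∈ X, Tendsto (fun t => F t (y t i - x t j)) l (𝓝 (f (y₀ i - x₀ j)))) :
    Tendsto (fun t => ruijsenaarsDefect (F t) X Y (x t) (y t) k) l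
      (𝓝 (ruijsenaarsDefect f X Y x₀ y₀ k)) :=
  (tendsto_ruijsenaarsSum hxx fun i hi j hj => hyx j hj i hi).sub
    (tendsto_ruijsenaarsSum (fun i hi j hj hij => hyy j hj i hi hij.symm) hyx)

lemma tendsto_mul_ruijsenaarsDefect {𝕜 : Type*} [NontriviallyNormedField 𝕜] {f : 𝕜 → 𝕜}
    {x : ι → 𝕜} {y : κ → 𝕜} {r : 𝕜} {a : ι} {b : κ} (ha : a ∈ X) (hb : b ∈ Y) (hab : y b = x a)
    (hf : ∀ i ∈ X, ∀ j ∈ Y, (i, j) ≠ (a, b) → ContinuousAt f (y j - x i))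
    (hr : Tendsto (fun h => h * f h) (𝓝[≠] 0) (𝓝 r)) :
    Tendsto (fun h => h * ruijsenaarsDefect f X Y x (fun j => y j + h) (k + 1)) (𝓝[≠] 0)
      (𝓝 (r * ((∏ j ∈ Y.erase b, f (y j - x a)) * ∏ i ∈ X.erase a, f (y b - x i)) *
        ruijsenaarsDefect f (X.erase a) (Y.erase b) x y k)) := by
  have hε : Tendsto (fun h : 𝕜 => h) (𝓝[≠] 0) (𝓝 0) := tendsto_id.mono_left nhdsWithin_le_nhds
  have hpole : Tendsto (fun h => h * f (y b + h - x a)) (𝓝[≠] 0) (𝓝 r) := by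
    simpa [hab] using hr
  have hlim : ∀ i ∈ X, ∀ j ∈ Y, (i, j) ≠ (a, b) →
      Tendsto (fun h => f (y j + h - x i)) (𝓝[≠] 0) (𝓝 (f (y j - x i))) := fun i hi j hj hij => by
    have harg : Tendsto (fun h => y j + h - x i) (𝓝 0) (𝓝 (y j - x i)) :=
      Continuous.tendsto' (by fun_prop) _ _ (by simp)
    exact ((hf i hi j hj hij).tendsto.comp harg).mono_left nhdsWithin_le_nhds
  have h := (tendsto_mul_ruijsenaarsSum (k := k) (A := fun i j => f (x i - x j))
    (B := fun i j => f (y j - x i)) ha hb hε hpole hlim fun i _ => by rw [hab]).sub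
    (tendsto_mul_ruijsenaarsSum (k := k) (A := fun i j => f (y j - y i))
      (B := fun i j => f (y i - x j)) hb ha hε hpole
      (fun j hj i hi hji => hlim i hi j hj (by rintro ⟨⟩; exact hji rfl)) fun j _ => by rw [hab])
  rw [mul_comm (∏ i ∈ X.erase a, _), ← mul_sub] at h
  simpa only [ruijsenaarsDefect, add_sub_add_right_eq_sub, mul_sub] using h

end ruijsenaarsDefect

section Vanishing

variable {ι κ : Type*} {τ μ r : ℂ} {f : ℂ → ℂ}
  {X : Finset ι} {Y : Finset κ} {x : ι → ℂ} {y : κ → ℂ}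

/-- General position of two families of points: the differences `y j - x i` are pairwise distinct
modulo the lattice, so that under a simultaneous translation of the `y j` no two of them reach a
lattice point at the same time. -/
def InGeneralPosition (τ : ℂ) (X : Finset ι) (Y : Finset κ) (x : ι → ℂ) (y : κ → ℂ) : Prop :=
  ((X ×ˢ Y : Finset (ι × κ)) : Set (ι × κ)).Pairwise fun p q =>
    y p.2 - x p.1 - (y q.2 - x q.1) ∉ lat τ

lemma InGeneralPosition.mono (h : InGeneralPosition τ X Y x y) {X' : Finset ι} {Y' : Finset κ}
    (hX : X' ⊆ X) (hY : Y' ⊆ Y) : InGeneralPosition τ X' Y' x y :=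
  Set.Pairwise.mono (coe_subset.mpr (product_subset_product hX hY)) h

lemma InGeneralPosition.add_right (h : InGeneralPosition τ X Y x y) (c : ℂ) :
    InGeneralPosition τ X Y x (fun j => y j + c) := by
  intro p hp q hq hpq
  rw [add_sub_right_comm, add_sub_right_comm (y q.2), add_sub_add_right_eq_sub]
  exact h hp hq hpq

lemma InGeneralPosition.add_sub_notMem_lat (h : InGeneralPosition τ X Y x y) {a i : ι} {b j : κ}
    (ha : a ∈ X) (hb : b ∈ Y) (hi : i ∈ X) (hj : j ∈ Y) (hij : (i, j) ≠ (a, b)) :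
    y j + (x a - y b) - x i ∉ lat τ := by
  rw [show y j + (x a - y b) - x i = y j - x i - (y b - x a) by ring]
  exact h (mem_product.mpr ⟨hi, hj⟩) (mem_product.mpr ⟨ha, hb⟩) hij

variable [DecidableEq ι] [DecidableEq κ]

lemma isQuasiperiodic_ruijsenaarsDefect (hf : IsQuasiperiodic τ 1 μ f) (hXY : X.card = Y.card)
    (k : ℕ) : IsQuasiperiodic τ 1 (μ ^ (Y.card * k))
      fun z => ruijsenaarsDefect f X Y x (fun j => y j + z) k where
  add_one z := by
    simpa [add_assoc] using ruijsenaarsDefect_add (y := fun j => y j + z) hf.add_one hXY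
  add_tau z := by
    simpa [add_assoc] using ruijsenaarsDefect_add (y := fun j => y j + z) hf.add_tau hXY

lemma ruijsenaarsDefect_eq_zero_of_tendsto {k : ℕ} (hτ : 0 < τ.im) (hμ0 : μ ≠ 0)
    (hf : IsQuasiperiodic τ 1 μ f) (hd : ∀ z ∉ lat τ, DifferentiableAt ℂ f z)
    (hμ : ∀ n : ℤ, μ ^ (Y.card * k) ≠ cexp (2 * Real.pi * I * (n * τ))) (hXY : X.card = Y.card)
    (hpole : ∀ i ∈ X, ∀ j ∈ Y, Tendsto (fun h => h * ruijsenaarsDefect f X Y x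
      (fun j' => y j' + (x i - y j + h)) k) (𝓝[≠] 0) (𝓝 0))
    (hyx : ∀ i ∈ X, ∀ j ∈ Y, y j - x i ∉ lat τ) :
    ruijsenaarsDefect f X Y x y k = 0 := by
  have hdiff : ∀ z, (∀ p ∈ X ×ˢ Y, z - (x p.1 - y p.2) ∉ lat τ) →
      DifferentiableAt ℂ (fun w => ruijsenaarsDefect f X Y x (fun j => y j + w) k) z :=
    fun z hz => differentiableAt_ruijsenaarsDefect_add fun i hi j hj => hd _ <| by
      simpa [sub_sub_eq_add_sub, add_comm] using hz (i, j) (mem_product.mpr ⟨hi, hj⟩)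
  obtain ⟨G, hG, hGq, hGF⟩ := (isQuasiperiodic_ruijsenaarsDefect hf hXY
    k).exists_entire_extension hτ one_ne_zero (pow_ne_zero _ hμ0) (X ×ˢ Y)
    (fun p => x p.1 - y p.2) hdiff
    fun p hp => hpole p.1 (mem_product.mp hp).1 p.2 (mem_product.mp hp).2
  have hG0 := hGq.eq_zero hτ hG hμ 0
  rw [hGF 0 fun p hp => by
    simpa using hyx p.1 (mem_product.mp hp).1 p.2 (mem_product.mp hp).2] at hG0
  simpa using hG0

theorem ruijsenaarsDefect_eq_zero (hτ : 0 < τ.im) (hμ0 : μ ≠ 0) (hf : IsQuasiperiodic τ 1 μ f)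
    (hd : ∀ z ∉ lat τ, DifferentiableAt ℂ f z)
    (hr : Tendsto (fun h => h * f h) (𝓝[≠] 0) (𝓝 r))
    (hμ : ∀ m : ℕ, m ≠ 0 → ∀ n : ℤ, μ ^ m ≠ cexp (2 * Real.pi * I * (n * τ)))
    (hXY : X.card = Y.card) (hgen : InGeneralPosition τ X Y x y)
    (hyx : ∀ i ∈ X, ∀ j ∈ Y, y j - x i ∉ lat τ) (k : ℕ) :
    ruijsenaarsDefect f X Y x y k = 0 := by
  induction hn : Y.card generalizing X Y y k with
  | zero =>
    obtain rfl := card_eq_zero.mp hn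
    obtain rfl := card_eq_zero.mp hXY
    cases k <;> simp [ruijsenaarsDefect, ruijsenaarsSum_zero, ruijsenaarsSum_empty_succ]
  | succ n ih =>
    obtain _ | k := k
    · simp [ruijsenaarsDefect, ruijsenaarsSum_zero]
    refine ruijsenaarsDefect_eq_zero_of_tendsto hτ hμ0 hf hd (hμ _ (by simp [hn])) hXY
      (fun a ha b hb => ?_) hyx
    have hres := tendsto_mul_ruijsenaarsDefect (y := fun j => y j + (x a - y b)) (k := k) ha hb
      (add_sub_cancel _ _)
      (fun i hi j hj hij => (hd _ (hgen.add_sub_notMem_lat ha hb hi hj hij)).continuousAt) hr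
    have hih := ih (by rw [card_erase_of_mem ha, card_erase_of_mem hb, hXY])
      ((hgen.add_right (x a - y b)).mono (erase_subset a X) (erase_subset b Y))
      (fun i hi j hj => hgen.add_sub_notMem_lat ha hb (mem_of_mem_erase hi)
        (mem_of_mem_erase hj) fun h => ne_of_mem_erase hi (congrArg Prod.fst h)) k
      (by rw [card_erase_of_mem hb, hn, Nat.add_sub_cancel])
    simpa only [hih, mul_zero, add_assoc] using hres

end Vanishing

/-! ### Perturbation to generic parameters -/

lemma ae_add_mul_notMem_lat (τ w : ℂ) {c : ℂ} (hc : c ≠ 0) : ∀ᵐ t, w + t * c ∉ lat τ :=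
  ((countable_lat τ).preimage ((add_right_injective w).comp (mul_left_injective₀ hc))).ae_notMem _

lemma exists_injective_add_ne_zero (N : ℕ) : ∃ u v : Fin N → ℂ,
    (∀ i j, u i + v j ≠ 0) ∧ Function.Injective fun p : Fin N × Fin N => u p.1 + v p.2 := by
  have hval : ∀ p : Fin N × Fin N, ((N * p.1 : ℕ) : ℂ) + ((1 + p.2 : ℕ) : ℂ) =
      ((finProdFinEquiv p + 1 : ℕ) : ℂ) := fun p => by
    push_cast [finProdFinEquiv_apply_val]
    ring
  refine ⟨fun i => (N * i : ℕ), fun j => (1 + j : ℕ), fun i j => ?_, fun p q h => ?_⟩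
  · rw [hval (i, j)]
    exact Nat.cast_ne_zero.mpr (Nat.succ_ne_zero _)
  · simp only [hval] at h
    exact finProdFinEquiv.injective (Fin.ext (Nat.succ_injective (Nat.cast_injective h)))

lemma ruijsenaarsDefect_phi_eq_zero_of_inGeneralPosition {ι κ : Type*} [DecidableEq ι]
    [DecidableEq κ] {τ ℏ : ℂ} {X : Finset ι} {Y : Finset κ} {x : ι → ℂ} {y : κ → ℂ}
    (hτ : 0 < τ.im) (hℏ : ∀ m : ℕ, m ≠ 0 → m * ℏ ∉ lat τ) (hXY : X.card = Y.card)
    (hgen : InGeneralPosition τ X Y x y) (hyx : ∀ i ∈ X, ∀ j ∈ Y, y j - x i ∉ lat τ) (k : ℕ) :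
    ruijsenaarsDefect (phi τ ℏ) X Y x y k = 0 := by
  have hℏ1 : ℏ ∉ lat τ := by simpa using hℏ 1 one_ne_zero
  exact ruijsenaarsDefect_eq_zero hτ (Complex.exp_ne_zero _) (isQuasiperiodic_phi τ ℏ)
    (fun z hz => (differentiableAt_uncurry_phi hτ hℏ1 hz).comp z
      (f := fun z => (ℏ, z)) (by fun_prop))
    (tendsto_mul_phi_zero hτ hℏ1) (fun m hm => exp_neg_pow_ne_exp (hℏ m hm)) hXY hgen hyx k

lemma frequently_inGeneralPosition (τ ℏ : ℂ) {N : ℕ} {u v : Fin N → ℂ} (x y : Fin N → ℂ)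
    (hne : ∀ i j, u i + v j ≠ 0)
    (hinj : Function.Injective fun p : Fin N × Fin N => u p.1 + v p.2) :
    ∃ᶠ t in 𝓝 (0 : ℂ), (∀ m : ℕ, m ≠ 0 → m * (ℏ + t) ∉ lat τ) ∧
      InGeneralPosition τ univ univ (fun i => x i - t * u i) (fun j => y j + t * v j) ∧
      ∀ i j, y j + t * v j - (x i - t * u i) ∉ lat τ := by
  have hsub : ∀ t i j, y j + t * v j - (x i - t * u i) = y j - x i + t * (u i + v j) :=
    fun t i j => by ring
  have hℏ : ∀ᵐ t : ℂ, ∀ m : ℕ, m ≠ 0 → m * (ℏ + t) ∉ lat τ :=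
    MeasureTheory.ae_all_iff.mpr fun m => eventually_imp_distrib_left.mpr fun hm => by
      simpa only [mul_add, mul_comm _ (m : ℂ)] using
        ae_add_mul_notMem_lat τ (m * ℏ) (Nat.cast_ne_zero.mpr hm)
  have hgen : ∀ᵐ t : ℂ, ∀ p q : Fin N × Fin N, p ≠ q →
      y p.2 - x p.1 - (y q.2 - x q.1) + t * (u p.1 + v p.2 - (u q.1 + v q.2)) ∉ lat τ := by
    simp only [MeasureTheory.ae_all_iff, eventually_imp_distrib_left]
    exact fun p q hpq => ae_add_mul_notMem_lat τ _ (sub_ne_zero.mpr (hinj.ne hpq))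
  have hyx : ∀ᵐ t : ℂ, ∀ i j, y j - x i + t * (u i + v j) ∉ lat τ := by
    simp only [MeasureTheory.ae_all_iff]
    exact fun i j => ae_add_mul_notMem_lat τ _ (hne i j)
  refine mem_closure_iff_frequently.mp
    (MeasureTheory.Measure.dense_of_ae ((hℏ.and (hgen.and hyx)).mono ?_) 0)
  rintro t ⟨hm, hgen, hyx⟩
  refine ⟨hm, fun p _ q _ hpq => ?_, fun i j => by simpa only [hsub] using hyx i j⟩
  simpa only [hsub, add_sub_add_comm, ← mul_sub] using hgen p q hpq

lemma tendsto_ruijsenaarsDefect_phi {ι κ : Type*} [DecidableEq ι] [DecidableEq κ] {τ ℏ : ℂ}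
    {X : Finset ι} {Y : Finset κ} {x u : ι → ℂ} {y v : κ → ℂ} {k : ℕ} (hτ : 0 < τ.im)
    (hℏ : ℏ ∉ lat τ) (hxx : ∀ i ∈ X, ∀ j ∈ X, i ≠ j → x i - x j ∉ lat τ)
    (hyy : ∀ i ∈ Y, ∀ j ∈ Y, i ≠ j → y i - y j ∉ lat τ)
    (hyx : ∀ i ∈ Y, ∀ j ∈ X, y i - x j ∉ lat τ) :
    Tendsto (fun t => ruijsenaarsDefect (phi τ (ℏ + t)) X Y (fun i => x i - t * u i)
      (fun j => y j + t * v j) k) (𝓝 0) (𝓝 (ruijsenaarsDefect (phi τ ℏ) X Y x y k)) := by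
  have hℏt : Tendsto (fun t => ℏ + t) (𝓝 0) (𝓝 ℏ) :=
    Continuous.tendsto' (by fun_prop) _ _ (by simp)
  have hxt : ∀ i, Tendsto (fun t => x i - t * u i) (𝓝 0) (𝓝 (x i)) := fun i =>
    Continuous.tendsto' (by fun_prop) _ _ (by simp)
  have hyt : ∀ j, Tendsto (fun t => y j + t * v j) (𝓝 0) (𝓝 (y j)) := fun j =>
    Continuous.tendsto' (by fun_prop) _ _ (by simp)
  exact tendsto_ruijsenaarsDefect
    (fun i hi j hj hij => tendsto_phi hτ hℏ (hxx i hi j hj hij) hℏt ((hxt i).sub (hxt j)))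
    (fun i hi j hj hij => tendsto_phi hτ hℏ (hyy i hi j hj hij) hℏt ((hyt i).sub (hyt j)))
    (fun i hi j hj => tendsto_phi hτ hℏ (hyx i hi j hj) hℏt ((hyt i).sub (hxt j)))

/-- **Ruijsenaars' elliptic function identities** (the `M = 1` case of the
`R`-matrix identities): for `1 ≤ k ≤ N`,
`∑_{|I|=k} ( ∏_{i∈I,j∉I} φ(x_i−x_j) ∏_{i∈I}∏_j φ(y_j−x_i)
           − ∏_{i∈I,j∉I} φ(y_j−y_i) ∏_{i∈I}∏_j φ(y_i−x_j) ) = 0`,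
where `φ(z) = φ(ℏ,z)` is the Kronecker function. -/
theorem Ruijsenaars_identities
    (τ ℏ : ℂ) (hτ : 0 < τ.im) (hℏ : ℏ ∉ lat τ)
    (N : ℕ) (hN : 1 ≤ N) (k : ℕ) (hk1 : 1 ≤ k) (hkN : k ≤ N)
    (x y : Fin N → ℂ)
    (hxx : ∀ i j : Fin N, i ≠ j → x i - x j ∉ lat τ)
    (hyy : ∀ i j : Fin N, i ≠ j → y i - y j ∉ lat τ)
    (hyx : ∀ i j : Fin N, y i - x j ∉ lat τ) :
    ∑ I ∈ (univ : Finset (Fin N)).powersetCard k,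
      ((∏ i ∈ I, ∏ j ∈ Iᶜ, phi τ ℏ (x i - x j)) * (∏ i ∈ I, ∏ j, phi τ ℏ (y j - x i)) -
        (∏ i ∈ I, ∏ j ∈ Iᶜ, phi τ ℏ (y j - y i)) * (∏ i ∈ I, ∏ j, phi τ ℏ (y i - x j))) = 0 := by
  suffices h : ruijsenaarsDefect (phi τ ℏ) univ univ x y k = 0 by
    simpa only [ruijsenaarsDefect, ruijsenaarsSum, compl_eq_univ_sdiff, sum_sub_distrib] using h
  obtain ⟨u, v, hne, hinj⟩ := exists_injective_add_ne_zero N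
  have hlim := tendsto_ruijsenaarsDefect_phi (X := univ) (Y := univ) (u := u) (v := v) (k := k)
    hτ hℏ (fun i _ j _ => hxx i j) (fun i _ j _ => hyy i j) (fun i _ j _ => hyx i j)
  refine tendsto_nhds_unique_of_frequently_eq hlim tendsto_const_nhds
    ((frequently_inGeneralPosition τ ℏ x y hne hinj).mono ?_)
  rintro t ⟨hℏt, hgen, hyxt⟩
  exact ruijsenaarsDefect_phi_eq_zero_of_inGeneralPosition hτ hℏt rfl hgen
    (fun i _ j _ => hyxt i j) k

end
end

section
/- Let τ ∈ ℂ with Im τ > 0 and let α ∈ ℂ with α ∉ ℤ + τℤ. If f : ℂ → ℂ is entire and satisfies f(z+1) = f(z) and f(z+τ) = exp(2πiα)·f(z) for all z ∈ ℂ, then f is identically zero. -/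
open Complex Finset Filter
open scoped BigOperators Topology

noncomputable section

/-!
The Fourier coefficients of `f` along `ℝ` vanish one at a time. For each integer `n` the function
`g z = exp (-2πinz) f z` is entire and `1`-periodic, so its integral over a horizontal segment of
length `1` is the same wherever the segment starts. Moving the segment by `τ` multiplies this
integral by `exp (2πi(α - nτ))`, which differs from `1` because `α` is not in the lattice; hence
the integral, the `n`-th coefficient, is `0`. Thus `f` vanishes on `ℝ`, and since its translates
satisfy the same hypotheses it vanishes everywhere.
-/

lemma mem_lat_iff_exists_exp_eq_one {τ α : ℂ} :
    α ∈ lat τ ↔ ∃ n : ℤ, exp (2 * Real.pi * I * (α - n * τ)) = 1 := by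
  have exp_eq_one_iff_eq (n : ℤ) :
      exp (2 * Real.pi * I * (α - n * τ)) = 1 ↔ ∃ m : ℤ, α = m + n * τ := by
    refine exp_eq_one_iff.trans (exists_congr fun m ↦ ?_)
    rw [mul_comm (m : ℂ), mul_right_inj' two_pi_I_ne_zero, sub_eq_iff_eq_add]
  simp only [exp_eq_one_iff_eq]
  exact exists_comm

section FourierUniqueness

variable {T : ℝ} [Fact (0 < T)]

lemma eq_zero_of_fourierCoeff_eq_zero {f : C(AddCircle T, ℂ)}
    (hf : ∀ n : ℤ, fourierCoeff f n = 0) : f = 0 := by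
  have hsum : Summable (fourierCoeff f) := by simpa only [funext hf] using summable_zero
  ext x
  simpa [hf] using (has_pointwise_sum_fourier_series_of_summable hsum x).tsum_eq.symm

lemma eq_zero_of_integral_fourier_smul_eq_zero {f : ℝ → ℂ} (hf : Continuous f)
    (hper : Function.Periodic f T)
    (hcoeff : ∀ n : ℤ, ∫ x in (0 : ℝ)..T, fourier (-n) (x : AddCircle T) • f x = 0) : f = 0 := by
  let F : C(AddCircle T, ℂ) := ⟨hper.lift, continuous_coinduced_dom.mpr hf⟩
  have hF : F = 0 := eq_zero_of_fourierCoeff_eq_zero fun n ↦ by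
    rw [fourierCoeff_eq_intervalIntegral F n 0, zero_add]
    exact smul_eq_zero_of_right _ (hcoeff n)
  funext x
  exact DFunLike.congr_fun hF (x : AddCircle T)

end FourierUniqueness

section PeriodIntegral

variable {E : Type*} [NormedAddCommGroup E] [NormedSpace ℂ E] [CompleteSpace E]
  {g : ℂ → E} {T : ℝ}

lemma integral_comp_add_eq_of_differentiable_of_periodic (hg : Differentiable ℂ g)
    (hper : Function.Periodic g T) (w : ℂ) :
    ∫ x in (0 : ℝ)..T, g (x + w) = ∫ x in (0 : ℝ)..T, g x := by
  obtain ⟨G, hG⟩ := hg.isExactOn_univ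
  replace hG (z : ℂ) : HasDerivAt G (g z) z := hG z (Set.mem_univ z)
  have integral_eq (z : ℂ) : ∫ x in (0 : ℝ)..T, g (x + z) = G (z + T) - G z := by
    have hderiv (x : ℝ) : HasDerivAt (fun y : ℝ ↦ G (y + z)) (g (x + z)) x := by
      simpa only [ofRealCLM_apply, ofReal_one, one_smul] using!
        ((hG (x + z)).comp_add_const (x : ℂ) z).scomp x ofRealCLM.hasDerivAt
    have hcont : Continuous fun x : ℝ ↦ g (x + z) := hg.continuous.comp (by fun_prop)
    rw [intervalIntegral.integral_eq_sub_of_hasDerivAt (fun x _ ↦ hderiv x)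
      (hcont.intervalIntegrable 0 T), ofReal_zero, zero_add, add_comm]
  have increment_deriv (z : ℂ) : HasDerivAt (fun z ↦ G (z + T) - G z) 0 z := by
    simpa only [hper z, sub_self] using! ((hG (z + T)).comp_add_const z (T : ℂ)).sub (hG z)
  have increment_const : G (w + T) - G w = G (0 + T) - G 0 :=
    is_const_of_deriv_eq_zero (fun z ↦ (increment_deriv z).differentiableAt)
      (fun z ↦ (increment_deriv z).deriv) w 0
  simpa only [add_zero] using (integral_eq w).trans (increment_const.trans (integral_eq 0).symm)

lemma integral_eq_zero_of_periodic_of_quasiperiodic (hg : Differentiable ℂ g)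
    (hper : Function.Periodic g T) {τ c : ℂ} (hc : c ≠ 1) (hquasi : ∀ z, g (z + τ) = c • g z) :
    ∫ x in (0 : ℝ)..T, g x = 0 := by
  have hfix : c • ∫ x in (0 : ℝ)..T, g x = ∫ x in (0 : ℝ)..T, g x := by
    simpa only [hquasi, intervalIntegral.integral_smul] using
      integral_comp_add_eq_of_differentiable_of_periodic hg hper τ
  have hzero : (c - 1) • ∫ x in (0 : ℝ)..T, g x = 0 := by
    rw [sub_smul, one_smul, hfix, sub_self]
  exact (smul_eq_zero.mp hzero).resolve_left (sub_ne_zero.mpr hc)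

end PeriodIntegral

section Quasiperiodic

variable {τ α : ℂ}

lemma integral_fourier_smul_eq_zero_of_quasiperiodic {E : Type*} [NormedAddCommGroup E]
    [NormedSpace ℂ E] [CompleteSpace E] {f : ℂ → E} (hα : α ∉ lat τ)
    (hf : Differentiable ℂ f) (hper : Function.Periodic f 1)
    (hquasi : ∀ z, f (z + τ) = exp (2 * Real.pi * I * α) • f z) (n : ℤ) :
    ∫ x in (0 : ℝ)..1, fourier (-n) (x : UnitAddCircle) • f x = 0 := by
  let g : ℂ → E := fun z ↦ exp (-(2 * Real.pi * I * n * z)) • f z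
  have hg : Differentiable ℂ g := by fun_prop
  have hg_per : Function.Periodic g (1 : ℝ) := fun z ↦ by
    have hexp : exp (-(2 * Real.pi * I * n * (z + 1))) = exp (-(2 * Real.pi * I * n * z)) :=
      exp_eq_exp_iff_exists_int.mpr ⟨-n, by push_cast; ring⟩
    simp only [g, ofReal_one, hper z, hexp]
  have hg_quasi (z : ℂ) : g (z + τ) = exp (2 * Real.pi * I * (α - n * τ)) • g z := by
    simp only [g, hquasi, smul_smul, ← exp_add]
    ring_nf
  have hmultiplier : exp (2 * Real.pi * I * (α - n * τ)) ≠ 1 := fun h ↦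
    hα (mem_lat_iff_exists_exp_eq_one.mpr ⟨n, h⟩)
  simpa only [g, fourier_coe_apply, Int.cast_neg, ofReal_one, div_one, mul_neg, neg_mul] using
    integral_eq_zero_of_periodic_of_quasiperiodic hg hg_per hmultiplier hg_quasi

lemma apply_ofReal_eq_zero_of_quasiperiodic {f : ℂ → ℂ} (hα : α ∉ lat τ)
    (hf : Differentiable ℂ f) (hper : Function.Periodic f 1)
    (hquasi : ∀ z, f (z + τ) = exp (2 * Real.pi * I * α) * f z) (x : ℝ) : f x = 0 := by
  have hreal_per : Function.Periodic (fun x : ℝ ↦ f x) 1 := fun x ↦ by simpa using hper x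
  have hreal : (fun x : ℝ ↦ f x) = 0 :=
    eq_zero_of_integral_fourier_smul_eq_zero (hf.continuous.comp continuous_ofReal) hreal_per
      (integral_fourier_smul_eq_zero_of_quasiperiodic hα hf hper hquasi)
  exact congrFun hreal x

end Quasiperiodic

theorem entire_quasiperiodic_vanishes_general {E : Type*} [NormedAddCommGroup E]
    [NormedSpace ℂ E] (τ α : ℂ) (hα : α ∉ lat τ) (f : ℂ → E) (hf : Differentiable ℂ f)
    (h1 : ∀ z : ℂ, f (z + 1) = f z)
    (h2 : ∀ z : ℂ, f (z + τ) = exp (2 * Real.pi * I * α) • f z) :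
    ∀ z : ℂ, f z = 0 := by
  intro z
  refine SeparatingDual.eq_zero_of_forall_dual_eq_zero (R := ℂ) fun ℓ ↦ ?_
  let h : ℂ → ℂ := fun w ↦ ℓ (f (z + w))
  have hh : Differentiable ℂ h := by fun_prop
  have hh_per : Function.Periodic h 1 := fun w ↦ by simp only [h, ← add_assoc, h1]
  have hh_quasi (w : ℂ) : h (w + τ) = exp (2 * Real.pi * I * α) * h w := by
    simp only [h, ← add_assoc, h2, map_smul, smul_eq_mul]
  simpa [h] using apply_ofReal_eq_zero_of_quasiperiodic hα hh hh_per hh_quasi 0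

/-- **Lemma A.1 (Liouville-type lemma):** an entire function with `f(z+1) = f(z)` and
`f(z+τ) = exp(2πiα) f(z)`, `α ∉ ℤ + τℤ`, vanishes identically. -/
theorem entire_quasiperiodic_vanishes
    (τ : ℂ) (hτ : 0 < τ.im) (α : ℂ) (hα : α ∉ lat τ)
    (f : ℂ → ℂ) (hf : Differentiable ℂ f)
    (h1 : ∀ z : ℂ, f (z + 1) = f z)
    (h2 : ∀ z : ℂ, f (z + τ) = Complex.exp (2 * (Real.pi : ℂ) * Complex.I * α) * f z) :
    ∀ z : ℂ, f z = 0 := by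
  exact entire_quasiperiodic_vanishes_general τ α hα f hf h1 h2

end
end
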